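/- The abelian group 𝕃 has rank one, i.e. the ℚ-vector space ℚ ⊗_ℤ 𝕃 is one-dimensional; moreover 𝕃 has no nonzero torsion elements if and only if the integers p_1,…,p_n are pairwise coprime. -/

import Mathlib

open scoped TensorProduct

/-- The subgroup of relations `p i • x⃗_i − c⃗` inside the free abelian group
`(Fin n → ℤ) × ℤ` on the generators `x⃗_1, …, x⃗_n, c⃗`. -/
def GLrels (n : ℕ) (p : Fin n → ℕ) : AddSubgroup ((Fin n → ℤ) × ℤ) :=
  AddSubgroup.closure (Set.range fun i : Fin n => ((Pi.single i (p i : ℤ), -1) : (Fin n → ℤ) × ℤ))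

/-- The grading group `𝕃 = ⟨x⃗_1, …, x⃗_n, c⃗⟩ / ⟨p_i x⃗_i − c⃗⟩`. -/
abbrev GLgroup (n : ℕ) (p : Fin n → ℕ) : Type :=
  ((Fin n → ℤ) × ℤ) ⧸ GLrels n p

theorem GL_mem (n : ℕ) (p : Fin n → ℕ) (v : Fin n → ℤ) (c : ℤ) :
    (v, c) ∈ GLrels n p ↔ ∃ k : Fin n → ℤ, (∀ i, v i = k i * p i) ∧ c = -∑ i, k i := by
  constructor
  · intro h
    have key : ∀ w ∈ GLrels n p,
        ∃ k : Fin n → ℤ, (∀ i, w.1 i = k i * p i) ∧ w.2 = -∑ i, k i := by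
      intro w hw
      unfold GLrels at hw
      induction hw using AddSubgroup.closure_induction with
      | mem x hx =>
        obtain ⟨i, rfl⟩ := hx
        refine ⟨Pi.single i 1, ?_, ?_⟩
        · intro j
          by_cases hj : j = i
          · subst hj; simp
          · simp [hj]
        · simp
      | zero => exact ⟨0, by simp, by simp⟩
      | add x y _ _ hx hy =>
        obtain ⟨k, hk, hk'⟩ := hx
        obtain ⟨l, hl, hl'⟩ := hy
        refine ⟨k + l, ?_, ?_⟩
        · intro i; simp [hk, hl, add_mul]
        · simp [hk', hl', Finset.sum_add_distrib]; ring
      | neg x _ hx =>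
        obtain ⟨k, hk, hk'⟩ := hx
        exact ⟨-k, by intro i; simp [hk], by simp [hk']⟩
    exact key _ h
  · rintro ⟨k, hk, hc⟩
    have : (v, c) = ∑ i, k i • ((Pi.single i (p i : ℤ), -1) : (Fin n → ℤ) × ℤ) := by
      ext j
      · simp [Prod.fst_sum, Finset.sum_apply, Pi.single_apply, hk]
      · simp [Prod.snd_sum, hc]
    rw [this]
    exact AddSubgroup.sum_mem _ fun i _ => AddSubgroup.zsmul_mem _
      (AddSubgroup.subset_closure (Set.mem_range_self i)) _

/-- The degree map on the free group. -/
noncomputable def GLdeg0 (n : ℕ) (p : Fin n → ℕ) : ((Fin n → ℤ) × ℤ) →+ ℚ where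
  toFun w := ∑ i, (w.1 i : ℚ) / p i + w.2
  map_zero' := by simp
  map_add' x y := by
    simp [add_div, Finset.sum_add_distrib]; ring

theorem GLdeg0_rels (n : ℕ) (p : Fin n → ℕ) (hp : ∀ i, 0 < p i) :
    GLrels n p ≤ (GLdeg0 n p).ker := by
  rintro ⟨v, c⟩ hw
  obtain ⟨k, hk, hc⟩ := (GL_mem n p v c).1 hw
  have : ∀ i, ((v i : ℤ) : ℚ) / p i = k i := fun i => by
    have := (hp i).ne'
    rw [hk]; push_cast; field_simp
  simp [AddMonoidHom.mem_ker, GLdeg0, this, hc]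

/-- The degree map. -/
noncomputable def GLdeg (n : ℕ) (p : Fin n → ℕ) (hp : ∀ i, 0 < p i) : GLgroup n p →+ ℚ :=
  QuotientAddGroup.lift _ (GLdeg0 n p) (GLdeg0_rels n p hp)

theorem GL_mul (n : ℕ) (p : Fin n → ℕ) (hp : ∀ i, 0 < p i) (x : GLgroup n p) :
    ∃ P : ℕ, 0 < P ∧ ∃ N : ℤ, P • x = N • ((((0, 1) : (Fin n → ℤ) × ℤ)) : GLgroup n p) := by
  obtain ⟨⟨v, c⟩, rfl⟩ := QuotientAddGroup.mk_surjective x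
  refine ⟨∏ i, p i, Finset.prod_pos fun i _ => hp i, 
    (∏ i, p i : ℕ) * c + ∑ i, ((∏ j ∈ Finset.univ.erase i, p j : ℕ) : ℤ) * v i, ?_⟩
  rw [← QuotientAddGroup.mk_nsmul, ← QuotientAddGroup.mk_zsmul, ← sub_eq_zero,
    ← QuotientAddGroup.mk_sub, QuotientAddGroup.eq_zero_iff]
  have := (GL_mem n p (fun i => (∏ i, p i : ℕ) * v i)
    (-∑ i, ((∏ j ∈ Finset.univ.erase i, p j : ℕ) : ℤ) * v i)).2
    ⟨fun i => ((∏ j ∈ Finset.univ.erase i, p j : ℕ) : ℤ) * v i, fun i => by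
      rw [← Finset.mul_prod_erase _ _ (Finset.mem_univ i)]; push_cast; ring, rfl⟩
  convert this using 1
  ext j
  · simp
  · simp

theorem GL_rank (n : ℕ) (p : Fin n → ℕ) (hp : ∀ i, 0 < p i) :
    Module.rank ℚ (ℚ ⊗[ℤ] GLgroup n p) = 1 := by
  rw [rank_eq_one_iff]
  refine ⟨1 ⊗ₜ ((((0, 1) : (Fin n → ℤ) × ℤ)) : GLgroup n p), ?_, ?_⟩
  · intro h
    have := congrArg (TensorProduct.lift
      ((LinearMap.mul ℤ ℚ).compl₂ (GLdeg n p hp).toIntLinearMap)) h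
    simp [GLdeg, GLdeg0] at this
  · intro t
    induction t with
    | zero => exact ⟨0, by simp⟩
    | add a b ha hb =>
      obtain ⟨r, rfl⟩ := ha
      obtain ⟨s, rfl⟩ := hb
      exact ⟨r + s, add_smul _ _ _⟩
    | tmul q x =>
      obtain ⟨P, hP, N, h⟩ := GL_mul n p hp x
      refine ⟨q / P * N, ?_⟩
      have hP' : (P : ℚ) ≠ 0 := by exact_mod_cast hP.ne'
      have e1 : q = (P : ℤ) • (q / P) := by simp; field_simp
      have e2 : q / P * N = N • (q / P) := by simp; ring
      rw [TensorProduct.smul_tmul', smul_eq_mul, mul_one, e2, TensorProduct.smul_tmul, ← h]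
      conv_rhs => rw [e1, TensorProduct.smul_tmul]
      rw [natCast_zsmul]

theorem GL_tf (n : ℕ) (p : Fin n → ℕ) (hp : ∀ i, 0 < p i)
    (hco : ∀ i j : Fin n, i ≠ j → Nat.Coprime (p i) (p j)) (x : GLgroup n p)
    (hx : ∃ m : ℕ, 0 < m ∧ m • x = 0) : x = 0 := by
  obtain ⟨m, hm, h⟩ := hx
  have hd : GLdeg n p hp x = 0 := by
    have := congrArg (GLdeg n p hp) h
    rw [map_nsmul, map_zero, smul_eq_zero] at this
    exact this.resolve_left hm.ne'
  obtain ⟨⟨v, c⟩, rfl⟩ := QuotientAddGroup.mk_surjective x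
  have hd' : ∑ i, (v i : ℚ) / p i + c = 0 := hd
  have hp' : ∀ i, (p i : ℚ) ≠ 0 := fun i => by exact_mod_cast (hp i).ne'
  have hE : ∑ i, v i * ((∏ j ∈ Finset.univ.erase i, p j : ℕ) : ℤ) + c * (∏ j, p j : ℕ) = 0 := by
    have h2 : (∑ i, (v i : ℚ) / p i + c) * (∏ j, p j : ℕ) = 0 := by rw [hd', zero_mul]
    rw [add_mul, Finset.sum_mul] at h2
    have h3 : ∀ i, (v i : ℚ) / p i * (∏ j, p j : ℕ) =
        v i * ((∏ j ∈ Finset.univ.erase i, p j : ℕ) : ℚ) := fun i => by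
      rw [← Finset.mul_prod_erase _ _ (Finset.mem_univ i)]
      have := hp' i
      push_cast
      field_simp
    simp only [h3] at h2
    exact_mod_cast h2
  have hdvd : ∀ i, (p i : ℤ) ∣ v i := by
    intro i
    rw [← Finset.add_sum_erase _ _ (Finset.mem_univ i), add_assoc] at hE
    have h1 : (p i : ℤ) ∣ v i * ((∏ j ∈ Finset.univ.erase i, p j : ℕ) : ℤ) := by
      rw [eq_neg_of_add_eq_zero_left hE, dvd_neg]
      refine dvd_add (Finset.dvd_sum fun j hj => ?_) ?_
      · refine Dvd.dvd.mul_left (Int.natCast_dvd_natCast.2 (Finset.dvd_prod_of_mem _ ?_)) _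
        simp at hj ⊢
        exact fun h => hj h.symm
      · exact Dvd.dvd.mul_left
          (Int.natCast_dvd_natCast.2 (Finset.dvd_prod_of_mem _ (Finset.mem_univ i))) _
    refine IsCoprime.dvd_of_dvd_mul_right ?_ h1
    rw [Nat.isCoprime_iff_coprime]
    refine Nat.Coprime.prod_right fun j hj => hco i j ?_
    simp at hj
    exact fun h => hj h.symm
  choose k hk using hdvd
  rw [QuotientAddGroup.eq_zero_iff, GL_mem]
  refine ⟨k, fun i => by rw [hk, mul_comm], ?_⟩
  have h3 : ∀ i, (v i : ℚ) / p i = k i := fun i => by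
    have := hp' i
    rw [hk]; push_cast; field_simp
  simp only [h3] at hd'
  have : ∑ i, k i + c = 0 := by exact_mod_cast hd'
  linarith

theorem GL_co (n : ℕ) (p : Fin n → ℕ) (hp : ∀ i, 0 < p i)
    (H : ∀ x : GLgroup n p, (∃ m : ℕ, 0 < m ∧ m • x = 0) → x = 0)
    (i j : Fin n) (hij : i ≠ j) : Nat.Coprime (p i) (p j) := by
  have hg : 0 < Nat.gcd (p i) (p j) := Nat.gcd_pos_of_pos_left _ (hp i)
  obtain ⟨a, ha⟩ := Nat.gcd_dvd_left (p i) (p j)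
  obtain ⟨b, hb⟩ := Nat.gcd_dvd_right (p i) (p j)
  unfold Nat.Coprime
  set g := Nat.gcd (p i) (p j) with hgdef
  have h0 := H (((Pi.single i (a : ℤ) - Pi.single j (b : ℤ), 0) : (Fin n → ℤ) × ℤ))
    ⟨g, hg, by
      rw [← QuotientAddGroup.mk_nsmul, QuotientAddGroup.eq_zero_iff]
      have e : g • ((Pi.single i (a : ℤ) - Pi.single j (b : ℤ), 0) : (Fin n → ℤ) × ℤ) =
        (Pi.single i (p i : ℤ), -1) - (Pi.single j (p j : ℤ), -1) := by
        rw [ha, hb]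
        ext l
        · simp [Pi.single_apply, mul_sub]
        · simp
      rw [e]
      exact AddSubgroup.sub_mem _ (AddSubgroup.subset_closure ⟨i, rfl⟩)
        (AddSubgroup.subset_closure ⟨j, rfl⟩)⟩
  rw [QuotientAddGroup.eq_zero_iff, GL_mem] at h0
  obtain ⟨k, hk, -⟩ := h0
  have h1 := hk i
  simp [hij] at h1
  have ha0 : (a : ℤ) ≠ 0 := by
    rintro h
    have haz : a = 0 := by exact_mod_cast h
    have hpos := hp i
    rw [ha, haz, mul_zero] at hpos
    exact lt_irrefl _ hpos
  have hpi : (p i : ℤ) = g * a := by exact_mod_cast ha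
  rw [hpi] at h1
  have h2 : (g : ℤ) * k i = 1 := by
    apply mul_right_cancel₀ ha0
    linarith
  have := Int.isUnit_iff.1 (IsUnit.of_mul_eq_one _ h2)
  omega

/-- `𝕃` has rank one, i.e. `ℚ ⊗_ℤ 𝕃` is a one-dimensional `ℚ`-vector
space; moreover `𝕃` is torsion-free if and only if `p_1, …, p_n` are pairwise coprime. -/
theorem rank_one_and_torsionfree_iff_coprime (d n : ℕ) (hd : 1 ≤ d)
    (p : Fin n → ℕ) (hp : ∀ i, 0 < p i) :
    Module.rank ℚ (ℚ ⊗[ℤ] GLgroup n p) = 1 ∧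
      ((∀ x : GLgroup n p, (∃ m : ℕ, 0 < m ∧ m • x = 0) → x = 0) ↔
        ∀ i j : Fin n, i ≠ j → Nat.Coprime (p i) (p j)) := by
  exact ⟨GL_rank n p hp, GL_co n p hp, GL_tf n p hp⟩
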